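/- Suppose (M_i)_{i ∈ I} is a family of pairwise disjoint nonempty Borel subsets of ℝ whose union is ℝ, and each M_i is closed under multiplication. Then the cardinality κ of I satisfies: κ ∈ {1, 2, 3, 4}, or κ ≥ cov(𝒩) and κ ≥ cov(ℳ). -/

import Mathlib

/-- `cov(𝒩)`: the least cardinality of a family of Lebesgue null subsets of `ℝ` covering `ℝ`. -/
noncomputable def covNull : Cardinal :=
  sInf { c : Cardinal | ∃ S : Set (Set ℝ), Cardinal.mk S = c ∧
    (∀ A ∈ S, MeasureTheory.volume A = 0) ∧ ⋃₀ S = Set.univ }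

/-- `cov(ℳ)`: the least cardinality of a family of meager subsets of `ℝ` covering `ℝ`. -/
noncomputable def covMeager : Cardinal :=
  sInf { c : Cardinal | ∃ S : Set (Set ℝ), Cardinal.mk S = c ∧
    (∀ A ∈ S, IsMeagre A) ∧ ⋃₀ S = Set.univ }

open Set MeasureTheory

/-- The sum of a non-null Borel set with itself contains an open interval. -/
theorem exists_Ioo_subset_add_self_of_volume_ne_zero {A : Set ℝ} (hA : MeasurableSet A)
    (h : volume A ≠ 0) : ∃ a b : ℝ, a < b ∧ ∀ z ∈ Ioo a b, ∃ x ∈ A, ∃ y ∈ A, x + y = z := by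
  obtain ⟨c, hc⟩ : ∃ c : ℝ, volume {x | x ∈ A ∧ -x + c ∈ A} ≠ 0 := by
    by_contra! hnull
    have hpre := (measurePreserving_prod_neg_add_swap (volume : Measure ℝ)
      (volume : Measure ℝ)).measure_preimage (hA.prod hA).nullMeasurableSet
    have hmeas : MeasurableSet
        ((fun z : ℝ × ℝ => (z.2, -z.2 + z.1)) ⁻¹' (A ×ˢ A)) :=
      (by fun_prop : Measurable fun z : ℝ × ℝ => (z.2, -z.2 + z.1)) (hA.prod hA)
    rw [Measure.prod_prod, (Measure.measure_prod_null hmeas).2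
      (Filter.Eventually.of_forall hnull)] at hpre
    exact h (mul_self_eq_zero.1 hpre.symm)
  have hE : MeasurableSet {x | x ∈ A ∧ -x + c ∈ A} :=
    hA.inter ((by fun_prop : Measurable fun x : ℝ => -x + c) hA)
  obtain ⟨ε, hε, hball⟩ := Metric.mem_nhds_iff.1
    (Measure.sub_mem_nhds_zero_of_addHaar_pos volume _ hE (pos_iff_ne_zero.2 hc))
  refine ⟨c - ε, c + ε, by linarith, fun z hz => ?_⟩
  have hzc : z - c ∈ Metric.ball (0 : ℝ) ε := by
    rw [mem_ball_zero_iff, Real.norm_eq_abs, abs_lt]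
    constructor <;> linarith [hz.1, hz.2]
  obtain ⟨x, hx, y, hy, hxy⟩ := Set.mem_sub.1 (hball hzc)
  exact ⟨x, hx.1, -y + c, hy.2, by linarith⟩

/-- The sum of a non-meager Borel set with itself contains an open interval. -/
theorem exists_Ioo_subset_add_self_of_not_isMeagre {A : Set ℝ} (hA : MeasurableSet A)
    (h : ¬ IsMeagre A) : ∃ a b : ℝ, a < b ∧ ∀ z ∈ Ioo a b, ∃ x ∈ A, ∃ y ∈ A, x + y = z := by
  obtain ⟨U, hU, hAU⟩ := hA.residualEq_isOpen
  rw [Filter.eventuallyEq_set] at hAU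
  obtain ⟨u, hu⟩ : U.Nonempty := by
    rw [nonempty_iff_ne_empty]
    rintro rfl
    refine h ?_
    filter_upwards [hAU] with x hx
    simpa using hx
  obtain ⟨ε, hε, hball⟩ := Metric.isOpen_iff.1 hU u hu
  refine ⟨2 * u - ε, 2 * u + ε, by linarith, fun z hz => ?_⟩
  have hreflect : ∀ᶠ x in residual ℝ, z - x ∈ A ↔ z - x ∈ U :=
    (tendsto_residual_of_isOpenMap (Homeomorph.subLeft z).continuous
      (Homeomorph.subLeft z).isOpenMap).eventually hAU
  obtain ⟨x, hx, hxA, hzxA⟩ := (dense_of_mem_residual (hAU.and hreflect)).inter_open_nonempty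
    (U ∩ (fun x => z - x) ⁻¹' U) (hU.inter (hU.preimage (by fun_prop))) ⟨u, hu, hball (by
      rw [Metric.mem_ball, Real.dist_eq, abs_lt]
      constructor <;> linarith [hz.1, hz.2])⟩
  exact ⟨x, hxA.2 hx.1, z - x, hzxA.2 hx.2, by ring⟩

/-- A set closed under addition contains the positive multiples of its elements. -/
theorem natCast_mul_mem_of_add_mem {S : Set ℝ} (hS : ∀ x ∈ S, ∀ y ∈ S, x + y ∈ S) {x : ℝ}
    (hx : x ∈ S) {n : ℕ} (hn : 1 ≤ n) : (n : ℝ) * x ∈ S := by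
  induction n, hn using Nat.le_induction with
  | base => simpa using hx
  | succ n _ ih =>
    have := hS _ ih _ hx
    push_cast
    rwa [add_one_mul]

/-- Every positive real has a positive multiple in a positive multiple of any given interval of
positive reals. -/
theorem exists_natCast_mul_eq_natCast_mul_mem_Ioo {a b x : ℝ} (ha : 0 ≤ a) (hab : a < b)
    (hx : 0 < x) : ∃ m n : ℕ, 1 ≤ m ∧ 1 ≤ n ∧ ∃ z ∈ Ioo a b, (m : ℝ) * x = n * z := by
  obtain ⟨n, hn⟩ := exists_nat_gt (x / (b - a))
  have hn0 : (0 : ℝ) < n := (div_pos hx (sub_pos.2 hab)).trans hn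
  rw [div_lt_iff₀ (sub_pos.2 hab)] at hn
  have hlt := Nat.lt_floor_add_one (n * a / x)
  have hle := Nat.floor_le (show 0 ≤ n * a / x by positivity)
  rw [div_lt_iff₀ hx] at hlt
  rw [le_div_iff₀ hx] at hle
  refine ⟨⌊n * a / x⌋₊ + 1, n, by omega, by exact_mod_cast hn0,
    (⌊n * a / x⌋₊ + 1) * x / n, ⟨?_, ?_⟩, ?_⟩
  · rw [lt_div_iff₀ hn0]
    linarith
  · rw [div_lt_iff₀ hn0]
    linarith
  · push_cast
    field_simp

/-- Suppose `ℝ` is partitioned into Borel sets closed under addition, and `J` is a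
translation-invariant `σ`-ideal such that `A + A` contains an interval for all Borel sets `A`
outside `J`. If the pieces are too few for sets in `J` indexed by them to cover `ℝ`, then the
positive reals lie in one piece. -/
theorem exists_Ioi_subset_of_add_mem {ι : Type} {P : ι → Set ℝ} (J : Set ℝ → Prop)
    (hunion : ∀ f : ℕ → Set ℝ, (∀ n, J (f n)) → J (⋃ n, f n))
    (htrans : ∀ (A : Set ℝ) (c : ℝ), J A → J ((fun x => x + c) ⁻¹' A))
    (hadd : ∀ A : Set ℝ, MeasurableSet A → ¬ J A →
      ∃ a b : ℝ, a < b ∧ ∀ z ∈ Ioo a b, ∃ x ∈ A, ∃ y ∈ A, x + y = z)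
    (hsmall : ¬ ∃ N : ι → Set ℝ, (∀ i, J (N i)) ∧ ⋃ i, N i = univ)
    (hmeas : ∀ i, MeasurableSet (P i)) (hdisj : Pairwise (Function.onFun Disjoint P))
    (hcover : ⋃ i, P i = univ) (hP : ∀ i, ∀ x ∈ P i, ∀ y ∈ P i, x + y ∈ P i) :
    ∃ i, Ioi 0 ⊆ P i := by
  obtain ⟨i, hi⟩ : ∃ i, ¬ J (P i ∩ Ioi 0) := by
    by_contra! hJ
    refine hsmall ⟨fun i => ⋃ n : ℕ, (fun x => x + (n : ℝ)) ⁻¹' (P i ∩ Ioi 0),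
      fun i => hunion _ fun n => htrans _ _ (hJ i), eq_univ_of_forall fun x => ?_⟩
    obtain ⟨n, hn⟩ := exists_nat_gt (-x)
    obtain ⟨i, hi⟩ := iUnion_eq_univ_iff.1 hcover (x + n)
    exact mem_iUnion.2 ⟨i, mem_iUnion.2 ⟨n, hi, show 0 < x + n by linarith⟩⟩
  obtain ⟨a, b, hab, hIoo⟩ := hadd _ ((hmeas i).inter measurableSet_Ioi) hi
  refine ⟨i, fun x hx => ?_⟩
  have hb : 0 < b := by
    obtain ⟨z, hz⟩ := nonempty_Ioo.2 hab
    obtain ⟨u, hu, v, hv, rfl⟩ := hIoo z hz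
    have hu0 : 0 < u := hu.2
    have hv0 : 0 < v := hv.2
    linarith [hz.2]
  obtain ⟨m, n, hm, hn, z, hz, hmn⟩ :=
    exists_natCast_mul_eq_natCast_mul_mem_Ioo (le_max_right a 0) (max_lt hab hb) hx
  obtain ⟨j, hj⟩ := iUnion_eq_univ_iff.1 hcover x
  obtain ⟨u, hu, v, hv, rfl⟩ := hIoo z ⟨(le_max_left _ _).trans_lt hz.1, hz.2⟩
  have hmem := natCast_mul_mem_of_add_mem (hP i) (hP i u hu.1 v hv.1) hn
  rw [← hmn] at hmem
  by_contra hxi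
  exact disjoint_left.1 (hdisj fun hij : i = j => hxi (hij ▸ hj)) hmem
    (natCast_mul_mem_of_add_mem (hP j) hj hm)

/-- Suppose `ℝ` is partitioned into Borel sets closed under multiplication, and `J` is a
translation-invariant `σ`-ideal such that `A + A` contains an interval for all Borel sets `A`
outside `J`. If the pieces are too few for sets in `J` indexed by them to cover `ℝ`, then there
are at most four of them. -/
theorem mk_le_four_of_mul_mem {ι : Type} {M : ι → Set ℝ} (J : Set ℝ → Prop)
    (hunion : ∀ f : ℕ → Set ℝ, (∀ n, J (f n)) → J (⋃ n, f n))
    (htrans : ∀ (A : Set ℝ) (c : ℝ), J A → J ((fun x => x + c) ⁻¹' A))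
    (hadd : ∀ A : Set ℝ, MeasurableSet A → ¬ J A →
      ∃ a b : ℝ, a < b ∧ ∀ z ∈ Ioo a b, ∃ x ∈ A, ∃ y ∈ A, x + y = z)
    (hsmall : ¬ ∃ N : ι → Set ℝ, (∀ i, J (N i)) ∧ ⋃ i, N i = univ)
    (hmeas : ∀ i, MeasurableSet (M i)) (hne : ∀ i, (M i).Nonempty)
    (hdisj : Pairwise (Function.onFun Disjoint M)) (hcover : ⋃ i, M i = univ)
    (hmul : ∀ i, ∀ x ∈ M i, ∀ y ∈ M i, x * y ∈ M i) :
    Cardinal.mk ι ≤ 4 := by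
  have hexp : ∀ c : ℝ, ∃ i, Ioi 0 ⊆ (fun t => Real.exp (c * t)) ⁻¹' M i := fun c =>
    exists_Ioi_subset_of_add_mem J hunion htrans hadd hsmall
      (fun i => (by fun_prop : Measurable fun t => Real.exp (c * t)) (hmeas i))
      (fun i j hij => (hdisj hij).preimage _)
      (by rw [← preimage_iUnion, hcover, preimage_univ])
      (fun i x hx y hy => by
        rw [mem_preimage, mul_add, Real.exp_add]
        exact hmul i _ hx _ hy)
  obtain ⟨p, hp⟩ := hexp 1
  obtain ⟨q, hq⟩ := hexp (-1)
  obtain ⟨r, hr⟩ := iUnion_eq_univ_iff.1 hcover 0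
  obtain ⟨s, hs⟩ := iUnion_eq_univ_iff.1 hcover 1
  have hpos : ∀ y : ℝ, 0 < y → y ∈ M p ∨ y ∈ M q ∨ y ∈ M s := fun y hy => by
    rcases lt_trichotomy y 1 with h | rfl | h
    · have := hq (show -Real.log y ∈ Ioi 0 from neg_pos.2 (Real.log_neg hy h))
      simp only [mem_preimage, neg_mul_neg, one_mul, Real.exp_log hy] at this
      exact Or.inr (Or.inl this)
    · exact Or.inr (Or.inr hs)
    · have := hp (show Real.log y ∈ Ioi 0 from Real.log_pos h)
      simp only [mem_preimage, one_mul, Real.exp_log hy] at this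
      exact Or.inl this
  have hunique : ∀ {i j : ι} {x : ℝ}, x ∈ M i → x ∈ M j → i = j := fun hi hj =>
    by_contra fun hij => disjoint_left.1 (hdisj hij) hi hj
  have hsurj : Function.Surjective ![p, q, r, s] := fun i => by
    obtain ⟨x, hx⟩ := hne i
    rcases eq_or_ne x 0 with rfl | hx0
    · exact ⟨2, hunique hr hx⟩
    · have hxx := hmul i x hx x hx
      rcases hpos _ (mul_self_pos.2 hx0) with h | h | h
      · exact ⟨0, hunique h hxx⟩
      · exact ⟨1, hunique h hxx⟩
      · exact ⟨3, hunique h hxx⟩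
  simpa using Cardinal.mk_le_of_surjective hsurj

/-- The index type of a cover of `ℝ` by sets satisfying `J` is at least as large as the least
cardinality of a family of such sets covering `ℝ`. -/
theorem sInf_mk_cover_le {ι : Type} (J : Set ℝ → Prop)
    (h : ∃ N : ι → Set ℝ, (∀ i, J (N i)) ∧ ⋃ i, N i = univ) :
    sInf { c : Cardinal | ∃ S : Set (Set ℝ), Cardinal.mk S = c ∧
      (∀ A ∈ S, J A) ∧ ⋃₀ S = univ } ≤ Cardinal.mk ι := by
  obtain ⟨N, hN, hcover⟩ := h
  refine le_trans (csInf_le' ?_) (Cardinal.mk_range_le (f := N))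
  exact ⟨range N, rfl, forall_mem_range.2 hN, by rwa [sUnion_range]⟩

/-- If `ℝ` is partitioned into nonempty Borel sets closed under multiplication, then the number
of pieces is `1`, `2`, `3`, `4`, or at least `max(cov(𝒩), cov(ℳ))`. -/
theorem stmt_8 {ι : Type} (M : ι → Set ℝ)
    (hmeas : ∀ i, MeasurableSet (M i))
    (hne : ∀ i, (M i).Nonempty)
    (hdisj : Pairwise (Function.onFun Disjoint M))
    (hcover : (⋃ i, M i) = Set.univ)
    (hmul : ∀ i, ∀ x ∈ M i, ∀ y ∈ M i, x * y ∈ M i) :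
    Cardinal.mk ι = 1 ∨ Cardinal.mk ι = 2 ∨ Cardinal.mk ι = 3 ∨ Cardinal.mk ι = 4 ∨
      (covNull ≤ Cardinal.mk ι ∧ covMeager ≤ Cardinal.mk ι) := by
  by_cases h4 : Cardinal.mk ι ≤ 4
  · obtain ⟨n, hn⟩ := Cardinal.lt_aleph0.1 (h4.trans_lt (Cardinal.natCast_lt_aleph0 (n := 4)))
    have hpos : Cardinal.mk ι ≠ 0 := by
      obtain ⟨i, -⟩ := Set.iUnion_eq_univ_iff.1 hcover 0
      exact Cardinal.mk_ne_zero_iff.2 ⟨i⟩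
    rw [hn] at h4 hpos ⊢
    norm_cast at h4 hpos
    interval_cases n <;> simp_all
  · refine Or.inr (Or.inr (Or.inr (Or.inr ⟨sInf_mk_cover_le (fun A => volume A = 0) ?_,
      sInf_mk_cover_le IsMeagre ?_⟩)))
    · by_contra hsmall
      exact h4 (mk_le_four_of_mul_mem _ (fun f hf => measure_iUnion_null hf)
        (fun A c hA => by rwa [measure_preimage_add_right])
        (fun A => exists_Ioo_subset_add_self_of_volume_ne_zero)
        hsmall hmeas hne hdisj hcover hmul)
    · by_contra hsmall
      exact h4 (mk_le_four_of_mul_mem _ (fun f hf => isMeagre_iUnion hf)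
        (fun A c hA => hA.preimage_of_isOpenMap (Homeomorph.addRight c).continuous
          (Homeomorph.addRight c).isOpenMap)
        (fun A => exists_Ioo_subset_add_self_of_not_isMeagre)
        hsmall hmeas hne hdisj hcover hmul)
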